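/- arXiv:2602.21063 — 2 statements merged into one kernel-verified Lean document; each statement's English description precedes it below -/
import Mathlib

section
/- Let b ∈ GL_n(E) be an invertible upper-triangular matrix and let 1 ≤ j < i ≤ n. Then there exist scalars x_{j+1}, …, x_i ∈ E such that, setting a := e^{i,j} + Σ_{l=j+1}^{i} x_l e^{i,l} (a matrix supported in row i and columns j through i, hence lower-triangular with (i,j)-entry 1), the conjugate b a b^{−1} stabilizes every step of the σ-permuted complete flag for σ the transposition exchanging i and j; in particular a ∈ Ad_{b^{−1} P_σ}(𝔟), where P_σ is the permutation matrix of σ and 𝔟 the upper-triangular matrices. (This is the key elementary-matrix claim in the proof of the infinite-fern theorem in the crystabelline case, where all blocks have size one.) -/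
open Matrix

/-- The `E`-subspace of `n × n` matrices supported on the entries `(i, j)` where `P i j` holds. -/
def entrySub (E : Type*) [Field E] (n : ℕ) (P : Fin n → Fin n → Prop) :
    Submodule E (Matrix (Fin n) (Fin n) E) where
  carrier := {M | ∀ i j, ¬ P i j → M i j = 0}
  add_mem' := by
    intro M N hM hN i j hij
    simp only [Matrix.add_apply, hM i j hij, hN i j hij, add_zero]
  zero_mem' := by
    intro i j _
    simp
  smul_mem' := by
    intro c M hM i j hij
    simp only [Matrix.smul_apply, hM i j hij, smul_zero]

/-- The Borel subalgebra `𝔟` of upper-triangular matrices. -/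
def upperTri (E : Type*) [Field E] (n : ℕ) : Submodule E (Matrix (Fin n) (Fin n) E) :=
  entrySub E n fun i j => i ≤ j

/-- `Ad_g(W) = g W g⁻¹`. -/
noncomputable def adConj {E : Type*} [Field E] {n : ℕ} (g : Matrix (Fin n) (Fin n) E)
    (W : Submodule E (Matrix (Fin n) (Fin n) E)) : Submodule E (Matrix (Fin n) (Fin n) E) :=
  W.map ((LinearMap.mulLeft E g).comp (LinearMap.mulRight E g⁻¹))

/-- The permutation matrix `P_σ` of a permutation `σ`, sending `e_q` to `e_{σ q}`. -/
def permMat (E : Type*) [Field E] {n : ℕ} (σ : Equiv.Perm (Fin n)) :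
    Matrix (Fin n) (Fin n) E :=
  Matrix.of fun p q => if p = σ q then 1 else 0

/-- The `k`-th step `span(e_{σ(1)}, …, e_{σ(k)})` of the `σ`-permuted complete flag. -/
def permFlag (E : Type*) [Field E] {n : ℕ} (σ : Equiv.Perm (Fin n)) (k : ℕ) :
    Submodule E (Fin n → E) :=
  Submodule.span E {v | ∃ m : Fin n, (m : ℕ) < k ∧ v = Pi.single (σ m) 1}

theorem key_vanish (E : Type*) [Field E] (n : ℕ) (b : Matrix (Fin n) (Fin n) E)
    (hbunit : IsUnit b.det) (hbupper : b ∈ upperTri E n) (i j : Fin n) (hij : j < i)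
    (A : Matrix (Fin n) (Fin n) E)
    (hA : ∀ p l, A p l = if p = i ∧ l ≤ i then b j l / b j j else 0)
    (p q : Fin n) (hqp : q < p) :
    (b * A * b⁻¹) (Equiv.swap i j p) (Equiv.swap i j q) = 0 := by
  have hb : b.BlockTriangular id := fun p q h => hbupper p q (not_le.mpr h)
  have hbi : b⁻¹.BlockTriangular id := by
    letI := Matrix.invertibleOfIsUnitDet b hbunit
    exact Matrix.blockTriangular_inv_of_blockTriangular hb
  have hrow : ∀ p q, (b * A * b⁻¹) p q = b p i * ∑ l, A i l * b⁻¹ l q := by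
    intro p q
    rw [Matrix.mul_assoc, Matrix.mul_apply, Finset.sum_eq_single i]
    · rw [Matrix.mul_apply]
    · intro c _ hc
      rw [Matrix.mul_apply, Finset.sum_eq_zero, mul_zero]
      intro l _
      simp [hA, hc]
    · simp
  have hs : ∀ q, q ≤ i → q ≠ j → ∑ l, A i l * b⁻¹ l q = 0 := by
    intro q hq hqj
    have h1 : ∑ l, A i l * b⁻¹ l q = (b j j)⁻¹ * (b * b⁻¹) j q := by
      rw [Matrix.mul_apply, Finset.mul_sum]
      refine Finset.sum_congr rfl fun l _ => ?_
      rw [hA]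
      by_cases hl : l ≤ i
      · simp only [hl, and_self, if_true]
        ring
      · have : b⁻¹ l q = 0 := hbi (lt_of_le_of_lt hq (not_le.mp hl))
        simp [this]
    rw [h1, Matrix.mul_nonsing_inv b hbunit, Matrix.one_apply_ne (Ne.symm hqj), mul_zero]
  rw [hrow]
  by_cases hp : i < p
  · have h1 : Equiv.swap i j p = p :=
      Equiv.swap_apply_of_ne_of_ne hp.ne' (hij.trans hp).ne'
    rw [h1, show b p i = 0 from hb hp, zero_mul]
  · have hqi : q < i := lt_of_lt_of_le hqp (not_lt.mp hp)
    rw [hs, mul_zero]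
    · by_cases hqj : q = j
      · rw [hqj, Equiv.swap_apply_right]
      · rw [Equiv.swap_apply_of_ne_of_ne hqi.ne hqj]
        exact hqi.le
    · intro h
      have : q = i := by
        apply (Equiv.swap i j).injective
        rw [h, Equiv.swap_apply_left]
      exact hqi.ne this

theorem flag_stable (E : Type*) [Field E] (n : ℕ) (C : Matrix (Fin n) (Fin n) E)
    (σ : Equiv.Perm (Fin n)) (hC : ∀ p q, q < p → C (σ p) (σ q) = 0) (k : ℕ) :
    ∀ v ∈ permFlag E σ k, C.mulVec v ∈ permFlag E σ k := by
  intro v hv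
  induction hv using Submodule.span_induction with
  | mem v hv =>
    obtain ⟨m, hm, rfl⟩ := hv
    have h : C.mulVec (Pi.single (σ m) 1) =
        ∑ p, C (σ p) (σ m) • (Pi.single (σ p) 1 : Fin n → E) := by
      rw [Equiv.sum_comp σ (fun p => C p (σ m) • (Pi.single p 1 : Fin n → E))]
      ext a
      simp [Finset.sum_apply, Pi.single_apply]
    rw [h]
    refine Submodule.sum_mem _ fun p _ => ?_
    by_cases hp : m < p
    · rw [hC p m hp, zero_smul]
      exact Submodule.zero_mem _
    · refine Submodule.smul_mem _ _ (Submodule.subset_span ⟨p, ?_, rfl⟩)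
      have : (p : ℕ) ≤ m := not_lt.mp hp
      omega
  | zero => simp
  | add x y _ _ hx hy => rw [Matrix.mulVec_add]; exact Submodule.add_mem _ hx hy
  | smul c x _ hx => rw [Matrix.mulVec_smul]; exact Submodule.smul_mem _ _ hx

theorem ad_mem (E : Type*) [Field E] (n : ℕ) (b A : Matrix (Fin n) (Fin n) E)
    (hbunit : IsUnit b.det)
    (σ : Equiv.Perm (Fin n)) (hC : ∀ p q, q < p → (b * A * b⁻¹) (σ p) (σ q) = 0) :
    A ∈ adConj (b⁻¹ * permMat E σ) (upperTri E n) := by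
  refine ⟨(b * A * b⁻¹).submatrix σ σ, fun p q h => hC p q (not_le.mp h), ?_⟩
  generalize hCC : b * A * b⁻¹ = C
  have hP : permMat E σ * (permMat E σ)ᵀ = 1 := by
    ext p q
    rw [Matrix.mul_apply, ← Equiv.sum_comp σ.symm]
    simp [permMat, Matrix.one_apply, eq_comm]
  have hdet : IsUnit (permMat E σ).det := by
    have := congrArg Matrix.det hP
    rw [Matrix.det_mul, Matrix.det_one] at this
    exact IsUnit.of_mul_eq_one _ this
  have hPC : permMat E σ * C.submatrix σ σ = C * permMat E σ := by
    ext p q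
    rw [Matrix.mul_apply, Matrix.mul_apply, ← Equiv.sum_comp σ.symm]
    simp [permMat]
  simp only [LinearMap.comp_apply, LinearMap.mulLeft_apply, LinearMap.mulRight_apply]
  rw [Matrix.mul_inv_rev, Matrix.nonsing_inv_nonsing_inv b hbunit]
  calc b⁻¹ * permMat E σ * (C.submatrix σ σ * ((permMat E σ)⁻¹ * b))
      = b⁻¹ * (permMat E σ * C.submatrix σ σ) * (permMat E σ)⁻¹ * b := by
        simp only [Matrix.mul_assoc]
    _ = b⁻¹ * C * (permMat E σ * (permMat E σ)⁻¹) * b := by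
        rw [hPC]; simp only [Matrix.mul_assoc]
    _ = (b⁻¹ * b) * A * (b⁻¹ * b) := by
        rw [Matrix.mul_nonsing_inv _ hdet, ← hCC]; simp only [Matrix.mul_assoc, Matrix.mul_one, Matrix.one_mul]
    _ = A := by simp [Matrix.nonsing_inv_mul b hbunit]

/-- Let `b ∈ GL_n(E)` be an invertible upper-triangular matrix and let
`1 ≤ j < i ≤ n`.  Then there exist scalars `x_{j+1}, …, x_i ∈ E` such that, setting
`A := e^{i,j} + Σ_{l=j+1}^{i} x_l e^{i,l}` (a matrix supported in row `i` and columns `j` through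
`i`, hence lower-triangular with `(i,j)`-entry `1`), the conjugate `b A b⁻¹` stabilizes every step
of the `σ`-permuted complete flag for `σ` the transposition exchanging `i` and `j`; in particular
`A ∈ Ad_{b⁻¹ P_σ}(𝔟)`, where `P_σ` is the permutation matrix of `σ` and `𝔟` the upper-triangular
matrices. -/
theorem statement_2 (E : Type*) [Field E] (n : ℕ) (b : Matrix (Fin n) (Fin n) E)
    (hbunit : IsUnit b.det) (hbupper : b ∈ upperTri E n)
    (i j : Fin n) (hij : j < i) :
    ∃ (x : Fin n → E) (A : Matrix (Fin n) (Fin n) E),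
      A = Matrix.single i j 1 +
            ∑ l ∈ Finset.Ioc j i, x l • Matrix.single i l 1 ∧
      (∀ k : ℕ, ∀ v ∈ permFlag E (Equiv.swap i j) k,
        (b * A * b⁻¹).mulVec v ∈ permFlag E (Equiv.swap i j) k) ∧
      A ∈ adConj (b⁻¹ * permMat E (Equiv.swap i j)) (upperTri E n) := by
  have hb : b.BlockTriangular id := fun p q h => hbupper p q (not_le.mpr h)
  have hjj : b j j ≠ 0 := by
    have h := hbunit.ne_zero
    rw [Matrix.det_of_upperTriangular hb] at h
    exact Finset.prod_ne_zero_iff.mp h j (Finset.mem_univ j)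
  have hA : ∀ p l, (Matrix.single i j 1 +
      ∑ l ∈ Finset.Ioc j i, (b j l / b j j) • Matrix.single i l (1 : E) :
        Matrix (Fin n) (Fin n) E) p l = if p = i ∧ l ≤ i then b j l / b j j else 0 := by
    intro p l
    rw [Matrix.add_apply, Matrix.sum_apply]
    by_cases hp : p = i
    · subst hp
      have h1 : ∀ c, ((b j c / b j j) • Matrix.single p c (1 : E)) p l =
          if c = l then b j c / b j j else 0 := by
        intro c
        simp [Matrix.single_apply]
      simp only [h1, Finset.sum_ite_eq', Finset.mem_Ioc, Matrix.single_apply, true_and]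
      rcases lt_trichotomy l j with h | h | h
      · have : b j l = 0 := hb h
        simp [h.ne', h.not_gt, this]
      · subst h
        simp [hij.le, hjj]
      · simp [h.ne, h]
    · simp [Matrix.single_apply, hp, Ne.symm hp]
  have hC := key_vanish E n b hbunit hbupper i j hij _ hA
  exact ⟨fun l => b j l / b j j, _, rfl, flag_stable E n _ _ hC,
    ad_mem E n b _ hbunit _ hC⟩
end

section
/- Suppose g ∈ GL_n(E) is non-critical, meaning that for every permutation u of {1,…,s} there exist a matrix h_u ∈ GL_n(E) stabilizing every subspace F^u_a (1 ≤ a ≤ s) and an invertible upper-triangular matrix β_u with g = h_u w_0 β_u. Then Σ_{u ∈ S_s} Σ_{a=1}^{s} (τ^u_a ∩ Ad_g(𝔟)) = Σ_{u ∈ S_s} (τ^u ∩ Ad_g(𝔟)) as E-subspaces of M_n(E). (This is the identification Hom^♭_{Fil}(D_σ, D_σ) ≅ Ad_{g_σ}(𝔟_σ)^∘_{S_0} := Σ_{u∈𝒲_s} Ad_u(τ_{S_0,σ}) ∩ Ad_{g_σ}(𝔟_σ): the envelope of the two-step pieces τ^u_a equals the envelope of the full pieces τ^u.) -/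
open Matrix

/-- The antidiagonal permutation matrix `w₀`, with `(w₀)_{m, n+1−m} = 1`. -/
def w0Mat (E : Type*) [Field E] (n : ℕ) : Matrix (Fin n) (Fin n) E :=
  Matrix.of fun i j => if j = i.rev then 1 else 0

/-- The flag `F^u_• : a ↦ W_{u⁻¹(1)} ⊕ ⋯ ⊕ W_{u⁻¹(a)}`, where `W_c = span(e_m : β m = c)`;
concretely `F^u_a` is the span of the standard basis vectors `e_m` with `u (β m) < a` (blocks are
`0`-indexed, so this consists of the first `a` blocks in the `u`-order). -/
def flagF (E : Type*) [Field E] {n s : ℕ} (β : Fin n → Fin s) (u : Equiv.Perm (Fin s))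
    (a : ℕ) : Submodule E (Fin n → E) :=
  Submodule.span E {v | ∃ m : Fin n, ((u (β m) : ℕ) < a) ∧ v = Pi.single m 1}

/-- The subalgebra of matrices stabilizing a subspace `F ⊆ E^n`. -/
def stabSub (E : Type*) [Field E] {n : ℕ} (F : Submodule E (Fin n → E)) :
    Submodule E (Matrix (Fin n) (Fin n) E) where
  carrier := {M | ∀ v ∈ F, M.mulVec v ∈ F}
  add_mem' := by
    intro M N hM hN v hv
    rw [Matrix.add_mulVec]
    exact F.add_mem (hM v hv) (hN v hv)
  zero_mem' := by
    intro v hv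
    rw [Matrix.zero_mulVec]
    exact F.zero_mem
  smul_mem' := by
    intro c M hM v hv
    rw [Matrix.smul_mulVec]
    exact F.smul_mem c (hM v hv)

/-- `𝔭^u = {M ∈ M_n(E) : M F^u_a ⊆ F^u_a for all a}`, the stabilizer of the flag `F^u_•`. -/
def flagParab (E : Type*) [Field E] {n s : ℕ} (β : Fin n → Fin s) (u : Equiv.Perm (Fin s)) :
    Submodule E (Matrix (Fin n) (Fin n) E) :=
  ⨅ a : ℕ, stabSub E (flagF E β u a)

/-- The matrices `M` such that the map induced by `M` from `F` to `E^n/F'` is a scalar, i.e.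
`∃ c, ∀ v ∈ F, M v − c • v ∈ F'`. -/
def relScalar (E : Type*) [Field E] {n : ℕ} (F F' : Submodule E (Fin n → E)) :
    Submodule E (Matrix (Fin n) (Fin n) E) where
  carrier := {M | ∃ c : E, ∀ v ∈ F, M.mulVec v - c • v ∈ F'}
  zero_mem' := ⟨0, fun v _ => by
    simp [Matrix.zero_mulVec]⟩
  add_mem' := by
    rintro M N ⟨c, hc⟩ ⟨d, hd⟩
    refine ⟨c + d, fun v hv => ?_⟩
    have hkey : (M + N).mulVec v - (c + d) • v
        = (M.mulVec v - c • v) + (N.mulVec v - d • v) := by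
      rw [Matrix.add_mulVec, add_smul]
      abel
    rw [hkey]
    exact F'.add_mem (hc v hv) (hd v hv)
  smul_mem' := by
    rintro t M ⟨c, hc⟩
    refine ⟨t * c, fun v hv => ?_⟩
    have hkey : (t • M).mulVec v - (t * c) • v = t • (M.mulVec v - c • v) := by
      rw [Matrix.smul_mulVec, SemigroupAction.mul_smul, smul_sub]
    rw [hkey]
    exact F'.smul_mem t (hc v hv)

/-- `τ^u_a = {M ∈ M_n(E) : M F^u_a ⊆ F^u_a, the restriction of M to F^u_a is a scalar, and the
endomorphism induced by M on E^n/F^u_a is a scalar}`. -/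
def tauStep (E : Type*) [Field E] {n s : ℕ} (β : Fin n → Fin s) (u : Equiv.Perm (Fin s))
    (a : ℕ) : Submodule E (Matrix (Fin n) (Fin n) E) :=
  stabSub E (flagF E β u a) ⊓ relScalar E (flagF E β u a) ⊥ ⊓ relScalar E ⊤ (flagF E β u a)

/-- `τ^u = {M ∈ 𝔭^u : for every 1 ≤ a ≤ s the endomorphism induced by M on F^u_a/F^u_{a−1} is a
scalar}`. -/
def tauFull (E : Type*) [Field E] {n s : ℕ} (β : Fin n → Fin s) (u : Equiv.Perm (Fin s)) :
    Submodule E (Matrix (Fin n) (Fin n) E) :=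
  flagParab E β u ⊓
    ⨅ a : Fin s, relScalar E (flagF E β u ((a : ℕ) + 1)) (flagF E β u (a : ℕ))

theorem mem_flagF_iff {E : Type*} [Field E] {n s : ℕ} (β : Fin n → Fin s)
    (u : Equiv.Perm (Fin s)) (a : ℕ) (v : Fin n → E) :
    v ∈ flagF E β u a ↔ ∀ m, ¬ ((u (β m) : ℕ) < a) → v m = 0 := by
  constructor
  · intro hv
    unfold flagF at hv
    induction hv using Submodule.span_induction with
    | mem x hx =>
      obtain ⟨k, hk, rfl⟩ := hx
      intro m hm
      have : m ≠ k := by rintro rfl; exact hm hk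
      simp [this]
    | zero => intro m _; rfl
    | add x y _ _ hx hy => intro m hm; simp [hx m hm, hy m hm]
    | smul t x _ hx => intro m hm; simp [hx m hm]
  · intro h
    have hv : v = ∑ m, v m • (Pi.single m (1 : E) : Fin n → E) := by
      ext k
      simp [Finset.sum_apply, Pi.single_apply]
    rw [hv]
    refine Submodule.sum_mem _ fun m _ => ?_
    by_cases hm : (u (β m) : ℕ) < a
    · exact Submodule.smul_mem _ _ (Submodule.subset_span ⟨m, hm, rfl⟩)
    · rw [h m hm, zero_smul]; exact Submodule.zero_mem _

theorem single_mem_flagF {E : Type*} [Field E] {n s : ℕ} (β : Fin n → Fin s)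
    (u : Equiv.Perm (Fin s)) (a : ℕ) (k : Fin n) (hk : (u (β k) : ℕ) < a) :
    (Pi.single k (1 : E) : Fin n → E) ∈ flagF E β u a :=
  Submodule.subset_span ⟨k, hk, rfl⟩

theorem flagF_mono {E : Type*} [Field E] {n s : ℕ} (β : Fin n → Fin s)
    (u : Equiv.Perm (Fin s)) {a b : ℕ} (hab : a ≤ b) : flagF E β u a ≤ flagF E β u b := by
  intro v hv
  rw [mem_flagF_iff] at hv ⊢
  intro m hm
  exact hv m (by omega)

theorem tauStep_le_tauFull {E : Type*} [Field E] {n s : ℕ} (β : Fin n → Fin s)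
    (u : Equiv.Perm (Fin s)) (a : ℕ) : tauStep E β u a ≤ tauFull E β u := by
  rintro M ⟨⟨hst, c, hc⟩, d, hd⟩
  have hc' : ∀ v ∈ flagF E β u a, M.mulVec v = c • v := fun v hv => by
    have := hc v hv
    rw [Submodule.mem_bot] at this
    exact sub_eq_zero.mp this
  refine ⟨?_, ?_⟩
  · rw [flagParab, SetLike.mem_coe, Submodule.mem_iInf]
    intro b v hv
    rcases le_total b a with h | h
    · rw [hc' v (flagF_mono β u h hv)]
      exact Submodule.smul_mem _ _ hv
    · have := flagF_mono β u h (hd v trivial)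
      have h2 := Submodule.add_mem _ this (Submodule.smul_mem _ d hv)
      simpa using h2
  · rw [SetLike.mem_coe, Submodule.mem_iInf]
    intro b
    rcases Nat.lt_or_ge b a with h | h
    · refine ⟨c, fun v hv => ?_⟩
      rw [hc' v (flagF_mono β u (by omega) hv), sub_self]
      exact Submodule.zero_mem _
    · exact ⟨d, fun v _ => flagF_mono β u h (hd v trivial)⟩

/-- The projection onto the block `c`. -/
def blockProj (E : Type*) [Field E] {n s : ℕ} (β : Fin n → Fin s) (c : Fin s) :
    Matrix (Fin n) (Fin n) E :=
  Matrix.diagonal fun m => if β m = c then 1 else 0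

theorem proj_mul_mem_tauStep {E : Type*} [Field E] {n s : ℕ} (β : Fin n → Fin s)
    (u v : Equiv.Perm (Fin s)) (c : Fin s) (hv : (v c : ℕ) = 0)
    (M : Matrix (Fin n) (Fin n) E) (hM : M ∈ tauFull E β u) :
    blockProj E β c * M ∈ tauStep E β v 1 := by
  have hvc : ∀ m, (v (β m) : ℕ) < 1 ↔ β m = c := by
    intro m
    constructor
    · intro h
      apply v.injective
      apply Fin.ext
      omega
    · rintro rfl; omega
  have hM2 := (Submodule.mem_iInf _).mp hM.2 (u c)
  obtain ⟨t, ht⟩ := hM2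
  have hrow : ∀ x m, (blockProj E β c * M).mulVec x m
      = if β m = c then M.mulVec x m else 0 := by
    intro x m
    rw [blockProj, ← Matrix.mulVec_mulVec, Matrix.mulVec_diagonal]
    split_ifs <;> simp
  have hin : ∀ x, (blockProj E β c * M).mulVec x ∈ flagF E β v 1 := by
    intro x
    rw [mem_flagF_iff]
    intro m hm
    rw [hvc] at hm
    rw [hrow, if_neg hm]
  refine ⟨⟨fun x _ => hin x, t, ?_⟩, 0, ?_⟩
  · intro x hx
    rw [mem_flagF_iff] at hx
    rw [Submodule.mem_bot]
    ext m
    have hx2 : x ∈ flagF E β u ((u c : ℕ) + 1) := by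
      rw [mem_flagF_iff]
      intro k hk
      apply hx
      rw [hvc]
      rintro rfl
      omega
    have h3 := (mem_flagF_iff _ _ _ _).mp (ht x hx2) m
    rw [Pi.sub_apply, hrow]
    by_cases hm : β m = c
    · rw [if_pos hm]
      apply h3
      rw [hm]; omega
    · have := hx m (by rw [hvc]; exact hm)
      simp [hm, this]
  · intro x _
    simpa using hin x

theorem mem_upperTri_iff {E : Type*} [Field E] {n : ℕ} (M : Matrix (Fin n) (Fin n) E) :
    M ∈ upperTri E n ↔ M.BlockTriangular id := by
  constructor
  · intro h i j hij
    exact h i j (not_le.mpr hij)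
  · intro h i j hij
    exact h (not_le.mp hij)

theorem w0Mat_mul_self (E : Type*) [Field E] (n : ℕ) : w0Mat E n * w0Mat E n = 1 := by
  ext i j
  rw [Matrix.mul_apply]
  simp only [w0Mat, Matrix.of_apply]
  rw [Finset.sum_eq_single i.rev]
  · simp [Matrix.one_apply, eq_comm]
  · intro k _ hk
    simp [hk]
  · simp

theorem diagonal_w0Mat (E : Type*) [Field E] (n : ℕ) (p : Fin n → E) :
    Matrix.diagonal p * w0Mat E n = w0Mat E n * Matrix.diagonal (fun i => p i.rev) := by
  ext i j
  rw [Matrix.diagonal_mul, Matrix.mul_diagonal]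
  simp only [w0Mat, Matrix.of_apply]
  split_ifs with h
  · subst h; simp
  · simp

theorem inv_diag_ne_zero {E : Type*} [Field E] {n : ℕ} (B : Matrix (Fin n) (Fin n) E)
    (hB : IsUnit B.det) (hT : B⁻¹.BlockTriangular id) (i : Fin n) : B⁻¹ i i ≠ 0 := by
  have h := Matrix.det_of_upperTriangular hT
  have h2 : B⁻¹.det ≠ 0 := (Matrix.isUnit_nonsing_inv_det B hB).ne_zero
  rw [h, Finset.prod_ne_zero_iff] at h2
  exact h2 i (Finset.mem_univ i)

theorem triangular_inv {E : Type*} [Field E] {n : ℕ} (B : Matrix (Fin n) (Fin n) E)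
    (hB : IsUnit B.det) (hT : B.BlockTriangular id) : B⁻¹.BlockTriangular id := by
  have := Matrix.invertibleOfIsUnitDet B hB
  exact Matrix.blockTriangular_inv_of_blockTriangular hT

/-- The key linear algebra step. -/
theorem conj_triangular {E : Type*} [Field E] {n : ℕ} (X B B' : Matrix (Fin n) (Fin n) E)
    (hB : IsUnit B.det) (hB' : IsUnit B'.det) (hT : B.BlockTriangular id)
    (hT' : B'.BlockTriangular id) (p : Fin n → Prop) [DecidablePred p]
    (h1 : X * (B⁻¹ * Matrix.diagonal (fun i => if p i then 1 else 0))
      = B⁻¹ * Matrix.diagonal (fun i => if p i then 1 else 0))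
    (h2 : X * (B'⁻¹ * Matrix.diagonal (fun i => if p i then 0 else 1)) = 0) :
    X.BlockTriangular id := by
  have hI := triangular_inv B hB hT
  have hI' := triangular_inv B' hB' hT'
  set D : Matrix (Fin n) (Fin n) E := Matrix.diagonal (fun i => if p i then 1 else 0) with hD
  set D' : Matrix (Fin n) (Fin n) E := Matrix.diagonal (fun i => if p i then 0 else 1) with hD'
  have hAT : (B⁻¹ * D + B'⁻¹ * D').BlockTriangular id :=
    (hI.mul (Matrix.blockTriangular_diagonal _)).add
      (hI'.mul (Matrix.blockTriangular_diagonal _))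
  have hAdet : IsUnit (B⁻¹ * D + B'⁻¹ * D').det := by
    rw [isUnit_iff_ne_zero, Matrix.det_of_upperTriangular hAT, Finset.prod_ne_zero_iff]
    intro i _
    rw [Matrix.add_apply, hD, hD', Matrix.mul_diagonal, Matrix.mul_diagonal]
    by_cases hp : p i
    · simpa [hp] using inv_diag_ne_zero B hB hI i
    · simpa [hp] using inv_diag_ne_zero B' hB' hI' i
  have hX : X * (B⁻¹ * D + B'⁻¹ * D') = B⁻¹ * D := by
    rw [Matrix.mul_add, h1, h2, add_zero]
  have hX2 : X = (B⁻¹ * D) * (B⁻¹ * D + B'⁻¹ * D')⁻¹ := by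
    have h3 := Matrix.mul_nonsing_inv_cancel_right _ X hAdet
    rw [hX] at h3
    exact h3.symm
  rw [hX2]
  exact (hI.mul (Matrix.blockTriangular_diagonal _)).mul (triangular_inv _ hAdet hAT)

theorem stab_entry {E : Type*} [Field E] {n s : ℕ} (β : Fin n → Fin s)
    (u : Equiv.Perm (Fin s)) (a : ℕ) (h : Matrix (Fin n) (Fin n) E)
    (hh : ∀ v ∈ flagF E β u a, h.mulVec v ∈ flagF E β u a) (m k : Fin n)
    (hk : (u (β k) : ℕ) < a) (hm : ¬ (u (β m) : ℕ) < a) : h m k = 0 := by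
  have := (mem_flagF_iff _ _ _ _).mp (hh _ (single_mem_flagF β u a k hk)) m hm
  simpa using this

theorem h_mul_eq {E : Type*} [Field E] {n : ℕ} (g h B : Matrix (Fin n) (Fin n) E)
    (hB : IsUnit B.det) (hg : g = h * w0Mat E n * B) (p : Fin n → E) :
    g * (B⁻¹ * Matrix.diagonal (fun i => p i.rev)) = h * Matrix.diagonal p * w0Mat E n := by
  rw [Matrix.mul_assoc h, diagonal_w0Mat, hg, ← Matrix.mul_assoc,
    Matrix.mul_nonsing_inv_cancel_right _ _ hB, Matrix.mul_assoc]

theorem blockProj_conj {E : Type*} [Field E] {n s : ℕ} (β : Fin n → Fin s) (c : Fin s)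
    (g : Matrix (Fin n) (Fin n) E) (hgu : IsUnit g.det)
    (u u' : Equiv.Perm (Fin s)) (huc : (u c : ℕ) = 0) (huc' : (u' c : ℕ) = s - 1)
    (h B h' B' : Matrix (Fin n) (Fin n) E)
    (hh : ∀ a : ℕ, ∀ v ∈ flagF E β u a, h.mulVec v ∈ flagF E β u a)
    (hh' : ∀ a : ℕ, ∀ v ∈ flagF E β u' a, h'.mulVec v ∈ flagF E β u' a)
    (hB : IsUnit B.det) (hB' : IsUnit B'.det) (hT : B ∈ upperTri E n)
    (hT' : B' ∈ upperTri E n) (hg : g = h * w0Mat E n * B) (hg' : g = h' * w0Mat E n * B') :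
    (g⁻¹ * blockProj E β c * g).BlockTriangular id := by
  rw [mem_upperTri_iff] at hT hT'
  have hvc : ∀ m, (u (β m) : ℕ) < 1 ↔ β m = c := by
    intro m
    constructor
    · intro h
      apply u.injective
      apply Fin.ext
      omega
    · intro h; rw [h]; omega
  have hvc' : ∀ m, (u' (β m) : ℕ) < s - 1 ↔ β m ≠ c := by
    intro m
    constructor
    · intro h h2; rw [h2] at h; omega
    · intro h
      have h3 : (u' (β m) : ℕ) ≠ u' c := fun h4 => h (u'.injective (Fin.ext h4))
      have := (u' (β m)).isLt
      omega
  apply conj_triangular _ B B' hB hB' hT hT' (fun i => β i.rev = c)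
  · have e := h_mul_eq g h B hB hg (fun m => if β m = c then 1 else 0)
    have e2 : blockProj E β c * (h * Matrix.diagonal (fun m => if β m = c then 1 else 0))
        = h * Matrix.diagonal (fun m => if β m = c then 1 else 0) := by
      ext m k
      rw [blockProj, Matrix.diagonal_mul, Matrix.mul_diagonal]
      by_cases hk : β k = c
      · by_cases hm : β m = c
        · simp [hm]
        · rw [stab_entry β u 1 h (hh 1) m k ((hvc k).mpr hk) (by rwa [hvc])]
          simp
      · simp [hk]
    rw [Matrix.mul_assoc, Matrix.mul_assoc, e, ← Matrix.mul_assoc (blockProj E β c), e2, ← e,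
      Matrix.nonsing_inv_mul_cancel_left _ _ hgu]
  · have e := h_mul_eq g h' B' hB' hg' (fun m => if β m = c then 0 else 1)
    have e2 : blockProj E β c * (h' * Matrix.diagonal (fun m => if β m = c then 0 else 1))
        = 0 := by
      ext m k
      rw [blockProj, Matrix.diagonal_mul, Matrix.mul_diagonal]
      by_cases hk : β k = c
      · simp [hk]
      · by_cases hm : β m = c
        · rw [stab_entry β u' (s - 1) h' (hh' _) m k ((hvc' k).mpr hk)
            (by rw [hvc']; simpa using hm)]
          simp
        · simp [hm]
    rw [Matrix.mul_assoc, Matrix.mul_assoc, e, ← Matrix.mul_assoc (blockProj E β c), e2]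
    simp

theorem mem_adConj_iff {E : Type*} [Field E] {n : ℕ} (g M : Matrix (Fin n) (Fin n) E)
    (hgu : IsUnit g.det) :
    M ∈ adConj g (upperTri E n) ↔ (g⁻¹ * M * g).BlockTriangular id := by
  rw [← mem_upperTri_iff]
  constructor
  · rintro ⟨N, hN, rfl⟩
    have : g⁻¹ * (g * (N * g⁻¹)) * g = N := by
      rw [Matrix.nonsing_inv_mul_cancel_left _ _ hgu, Matrix.nonsing_inv_mul_cancel_right _ _ hgu]
    simpa [this] using hN
  · intro h
    refine ⟨_, h, ?_⟩
    simp only [LinearMap.comp_apply, LinearMap.mulLeft_apply, LinearMap.mulRight_apply]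
    rw [Matrix.mul_nonsing_inv_cancel_right _ _ hgu, Matrix.mul_nonsing_inv_cancel_left _ _ hgu]

theorem sum_blockProj (E : Type*) [Field E] {n s : ℕ} (β : Fin n → Fin s) :
    ∑ c, blockProj E β c = 1 := by
  ext i j
  rw [Matrix.sum_apply]
  by_cases h : i = j
  · subst h; simp [blockProj]
  · simp [blockProj, h]

/-- Suppose `g ∈ GL_n(E)` is non-critical, meaning that for every permutation `u`
of `{1,…,s}` there exist a matrix `h_u ∈ GL_n(E)` stabilizing every subspace `F^u_a` and an
invertible upper-triangular matrix `β_u` with `g = h_u w₀ β_u`.  Then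
`Σ_{u ∈ S_s} Σ_{a=1}^{s} (τ^u_a ∩ Ad_g(𝔟)) = Σ_{u ∈ S_s} (τ^u ∩ Ad_g(𝔟))` as `E`-subspaces of
`M_n(E)`.  (Here `a : Fin s` corresponds to the paper's index `a + 1 ∈ {1,…,s}`.) -/
theorem statement_5 (E : Type*) [Field E] (n s : ℕ) (hs : 1 ≤ s)
    (β : Fin n → Fin s) (hβmono : Monotone β) (hβsurj : Function.Surjective β)
    (g : Matrix (Fin n) (Fin n) E)
    (hg : ∀ u : Equiv.Perm (Fin s),
      ∃ hu βu : Matrix (Fin n) (Fin n) E,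
        IsUnit hu.det ∧
        (∀ a : ℕ, ∀ v ∈ flagF E β u a, hu.mulVec v ∈ flagF E β u a) ∧
        IsUnit βu.det ∧ βu ∈ upperTri E n ∧ g = hu * w0Mat E n * βu) :
    (⨆ u : Equiv.Perm (Fin s), ⨆ a : Fin s,
        (tauStep E β u ((a : ℕ) + 1) ⊓ adConj g (upperTri E n)))
      = ⨆ u : Equiv.Perm (Fin s), (tauFull E β u ⊓ adConj g (upperTri E n)) := by
  have hs0 : 0 < s := hs
  have hw : IsUnit (w0Mat E n).det := by
    have := congrArg Matrix.det (w0Mat_mul_self E n)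
    rw [Matrix.det_mul, Matrix.det_one] at this
    exact IsUnit.of_mul_eq_one _ this
  have hgu : IsUnit g.det := by
    obtain ⟨h, B, hd, -, hBd, -, rfl⟩ := hg 1
    rw [Matrix.det_mul, Matrix.det_mul]
    exact (hd.mul hw).mul hBd
  apply le_antisymm
  · refine iSup_mono fun u => iSup_le fun a => ?_
    exact inf_le_inf_right _ (tauStep_le_tauFull β u _)
  · refine iSup_le fun u => ?_
    rintro M ⟨hM, hMg⟩
    have hsum : M = ∑ c, blockProj E β c * M := by
      rw [← Finset.sum_mul, sum_blockProj, Matrix.one_mul]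
    rw [hsum]
    refine Submodule.sum_mem _ fun c _ => ?_
    let v : Equiv.Perm (Fin s) := Equiv.swap c ⟨0, hs0⟩
    let v' : Equiv.Perm (Fin s) := Equiv.swap c ⟨s - 1, by omega⟩
    have hv : (v c : ℕ) = 0 := by simp [v]
    have hv' : (v' c : ℕ) = s - 1 := by simp [v']
    obtain ⟨h, B, -, hh, hB, hT, hgB⟩ := hg v
    obtain ⟨h', B', -, hh', hB', hT', hgB'⟩ := hg v'
    have hP := blockProj_conj β c g hgu v v' hv hv' h B h' B' hh hh' hB hB' hT hT' hgB hgB'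
    refine Submodule.mem_iSup_of_mem v (Submodule.mem_iSup_of_mem ⟨0, hs0⟩ ⟨?_, ?_⟩)
    · exact proj_mul_mem_tauStep β u v c hv M hM
    · rw [SetLike.mem_coe, mem_adConj_iff _ _ hgu] at hMg ⊢
      have e : g⁻¹ * (blockProj E β c * M) * g
          = (g⁻¹ * blockProj E β c * g) * (g⁻¹ * M * g) := by
        simp only [Matrix.mul_assoc]
        rw [Matrix.mul_nonsing_inv_cancel_left _ _ hgu]
      rw [e]
      exact hP.mul hMg
end
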